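/- Assume the abc-conjecture. Then for every integer k ≥ 3 and every real ε > 0 there exist constants c_ε > 0 and C > 0 such that for all real x ≥ C, the interval (x, x + c_ε · x^{1 − (2+ε)/k}] contains at most one k-full integer. -/

import Mathlib

/-- A positive integer `n` is `k`-full if every prime dividing `n` does so to at
least the `k`-th power. -/
def IsKFull (k n : ℕ) : Prop := ∀ p : ℕ, p.Prime → p ∣ n → p ^ k ∣ n

/-- The radical (kernel) of a natural number: the product of its prime divisors. -/
def natRadical (n : ℕ) : ℕ := ∏ p ∈ n.primeFactors, p

/-- The abc-conjecture: for every `ε > 0` there is `C_ε > 0` such that for all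
coprime positive integers `a`, `b`, `c` with `a + b = c`, one has
`c ≤ C_ε · rad(a·b·c)^(1+ε)`. -/
def ABCConjecture : Prop :=
  ∀ ε : ℝ, 0 < ε → ∃ Cε : ℝ, 0 < Cε ∧ ∀ a b c : ℕ,
    0 < a → 0 < b → 0 < c → Nat.Coprime a b → a + b = c →
    (c : ℝ) ≤ Cε * (natRadical (a * b * c) : ℝ) ^ (1 + ε)

/-!
Suppose `n < m` are both `k`-full. Divide `n + (m - n) = m` by its gcd `g`, apply the abc-conjecture
with exponent `1 + ε / k`, and absorb the lost factor using `g ≤ g ^ (1 + ε / k)`: up to a constant,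
`m ≤ ((m - n) * rad n * rad m) ^ (1 + ε / k)`. Since `rad n` and `rad m` are at most `m ^ (1 / k)`,
and `1 / (1 + ε / k) ≥ 1 - ε / k`, the gap `m - n` is at least a constant times
`m ^ (1 - (2 + ε) / k)`.
-/

open UniqueFactorizationMonoid (radical radical_dvd_radical radical_dvd_self radical_mul_dvd)

theorem natRadical_eq_radical (n : ℕ) : natRadical n = radical n :=
  Nat.radical_eq_prod_primeFactors.symm

theorem radical_mul_mul_dvd {M : Type*} [CommMonoidWithZero M] [NormalizationMonoid M]
    [UniqueFactorizationMonoid M] (a b c : M) :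
    radical (a * b * c) ∣ radical a * b * radical c :=
  radical_mul_dvd.trans <| mul_dvd_mul_right
    (radical_mul_dvd.trans <| mul_dvd_mul_left _ radical_dvd_self) _

theorem IsKFull.radical_pow_dvd {k n : ℕ} (h : IsKFull k n) : radical n ^ k ∣ n := by
  rw [Nat.radical_eq_prod_primeFactors, ← Finset.prod_pow]
  refine Finset.prod_dvd_of_isRelPrime (fun p hp q hq hpq ↦ ?_) fun p hp ↦
    h p (Nat.prime_of_mem_primeFactors hp) (Nat.dvd_of_mem_primeFactors hp)
  exact Nat.coprime_iff_isRelPrime.mp <| Nat.coprime_pow_primes _ _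
    (Nat.prime_of_mem_primeFactors hp) (Nat.prime_of_mem_primeFactors hq) hpq

theorem IsKFull.radical_le_rpow {k n : ℕ} (h : IsKFull k n) (hk : k ≠ 0) (hn : n ≠ 0) :
    ((radical n : ℕ) : ℝ) ≤ (n : ℝ) ^ (k : ℝ)⁻¹ := by
  rw [Real.le_rpow_inv_iff_of_pos (Nat.cast_nonneg _) (Nat.cast_nonneg _) (by positivity),
    Real.rpow_natCast]
  exact_mod_cast Nat.le_of_dvd (Nat.pos_of_ne_zero hn) h.radical_pow_dvd

/-- The abc inequality for one fixed exponent `1 + δ` and constant `K`, which is what the gap bound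
for a given `k` consumes. The third term of a triple is written as `a + b`. -/
def ABCBound (δ K : ℝ) : Prop :=
  ∀ a b : ℕ, 0 < a → 0 < b → a.Coprime b →
    ((a + b : ℕ) : ℝ) ≤ K * ((radical (a * b * (a + b)) : ℕ) : ℝ) ^ (1 + δ)

theorem ABCConjecture.exists_abcBound (habc : ABCConjecture) {δ : ℝ} (hδ : 0 < δ) :
    ∃ K, ABCBound δ K := by
  obtain ⟨K, -, hK⟩ := habc δ hδ
  refine ⟨K, fun a b ha hb hab ↦ ?_⟩
  simpa only [natRadical_eq_radical] using hK a b (a + b) ha hb (by positivity) hab rfl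

theorem min_one_inv_mul_rpow_le_of_le_mul_rpow {K δ s m d : ℝ} (hK : 0 < K) (hδ : 0 ≤ δ)
    (hm : 1 ≤ m) (hd : 0 ≤ d) (h : m ≤ K * (d * m ^ s) ^ (1 + δ)) :
    min 1 K⁻¹ * m ^ (1 - δ - s) ≤ d := by
  by_contra! hlt
  have hm0 : 0 < m := one_pos.trans_le hm
  set c := min 1 K⁻¹
  have hc0 : 0 < c := by positivity
  have hdm : d * m ^ s < c * m ^ (1 - δ) := calc
    d * m ^ s < c * m ^ (1 - δ - s) * m ^ s := by gcongr
    _ = c * m ^ (1 - δ) := by rw [mul_assoc, ← Real.rpow_add hm0, sub_add_cancel]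
  have hcpow : c ^ (1 + δ) ≤ c :=
    Real.rpow_le_self_of_le_one hc0.le (min_le_left _ _) (by linarith)
  have hmpow : m ^ ((1 - δ) * (1 + δ)) ≤ m := Real.rpow_le_self_of_one_le hm (by nlinarith)
  refine lt_irrefl m ?_
  calc
    m ≤ K * (d * m ^ s) ^ (1 + δ) := h
    _ < K * (c * m ^ (1 - δ)) ^ (1 + δ) := by gcongr
    _ = K * (c ^ (1 + δ) * m ^ ((1 - δ) * (1 + δ))) := by
      rw [Real.mul_rpow hc0.le (by positivity), ← Real.rpow_mul hm0.le]
    _ ≤ K * (K⁻¹ * m) := by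
      gcongr
      exact hcpow.trans (min_le_right _ _)
    _ = m := mul_inv_cancel_left₀ hK.ne' m

namespace ABCBound

variable {δ K : ℝ} {n d : ℕ}

theorem pos (h : ABCBound δ K) : 0 < K := by
  have h11 := h 1 1 one_pos one_pos (Nat.coprime_one_left 1)
  exact pos_of_mul_pos_left (lt_of_lt_of_le (by positivity) h11) (by positivity)

theorem add_le_mul_radical (h : ABCBound δ K) (hδ : 0 ≤ δ) (hn : n ≠ 0) (hd : d ≠ 0) :
    ((n + d : ℕ) : ℝ) ≤ K * ((radical n * d * radical (n + d) : ℕ) : ℝ) ^ (1 + δ) := by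
  have hK := h.pos
  obtain ⟨g, n', d', hg, hcop, rfl, rfl⟩ :=
    Nat.exists_coprime' (Nat.gcd_pos_of_pos_left d (Nat.pos_of_ne_zero hn))
  have hn' : 0 < n' := Nat.pos_of_ne_zero (left_ne_zero_of_mul hn)
  have hd' : 0 < d' := Nat.pos_of_ne_zero (left_ne_zero_of_mul hd)
  rw [← add_mul]
  have hrad : radical (n' * d' * (n' + d')) * g ≤
      radical (n' * g) * (d' * g) * radical ((n' + d') * g) := by
    refine Nat.le_of_dvd (by positivity) ?_
    calc
      radical (n' * d' * (n' + d')) * g ∣ radical n' * d' * radical (n' + d') * g :=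
        mul_dvd_mul_right (radical_mul_mul_dvd _ _ _) g
      _ = radical n' * (d' * g) * radical (n' + d') := by ring
      _ ∣ radical (n' * g) * (d' * g) * radical ((n' + d') * g) := by
        gcongr <;> exact radical_dvd_radical (dvd_mul_right _ _) (by positivity)
  calc
    (((n' + d') * g : ℕ) : ℝ) = ((n' + d' : ℕ) : ℝ) * g := Nat.cast_mul _ _
    _ ≤ K * ((radical (n' * d' * (n' + d')) : ℕ) : ℝ) ^ (1 + δ) * (g : ℝ) ^ (1 + δ) := by
      gcongr
      · exact h n' d' hn' hd' hcop
      · exact Real.self_le_rpow_of_one_le (Nat.one_le_cast.mpr hg) (by linarith)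
    _ = K * ((radical (n' * d' * (n' + d')) * g : ℕ) : ℝ) ^ (1 + δ) := by
      rw [Nat.cast_mul, Real.mul_rpow (by positivity) (by positivity), mul_assoc]
    _ ≤ K * ((radical (n' * g) * (d' * g) * radical ((n' + d') * g) : ℕ) : ℝ) ^ (1 + δ) := by
      gcongr

theorem add_le_mul_rpow_of_isKFull {k : ℕ} (h : ABCBound δ K) (hδ : 0 ≤ δ) (hk : k ≠ 0)
    (hn : n ≠ 0) (hd : d ≠ 0) (hnk : IsKFull k n) (hndk : IsKFull k (n + d)) :
    ((n + d : ℕ) : ℝ) ≤ K * (d * ((n + d : ℕ) : ℝ) ^ (2 / k : ℝ)) ^ (1 + δ) := by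
  have hK := h.pos
  have hradn : ((radical n : ℕ) : ℝ) ≤ ((n + d : ℕ) : ℝ) ^ (k : ℝ)⁻¹ :=
    (hnk.radical_le_rpow hk hn).trans (by gcongr; exact Nat.le_add_right n d)
  have hradnd := hndk.radical_le_rpow hk (by positivity)
  refine (h.add_le_mul_radical hδ hn hd).trans ?_
  gcongr
  calc
    ((radical n * d * radical (n + d) : ℕ) : ℝ)
      = (radical n : ℕ) * d * (radical (n + d) : ℕ) := by push_cast; rfl
    _ ≤ ((n + d : ℕ) : ℝ) ^ (k : ℝ)⁻¹ * d * ((n + d : ℕ) : ℝ) ^ (k : ℝ)⁻¹ := by gcongr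
    _ = d * (((n + d : ℕ) : ℝ) ^ (k : ℝ)⁻¹ * ((n + d : ℕ) : ℝ) ^ (k : ℝ)⁻¹) := by ring
    _ = d * ((n + d : ℕ) : ℝ) ^ (2 / k : ℝ) := by
      rw [← Real.rpow_add (by positivity), ← two_mul, div_eq_mul_inv]

theorem min_one_inv_mul_rpow_le_of_isKFull {ε : ℝ} {k : ℕ} (h : ABCBound (ε / k) K) (hε : 0 ≤ ε)
    (hk : k ≠ 0) (hn : n ≠ 0) (hd : d ≠ 0) (hnk : IsKFull k n) (hndk : IsKFull k (n + d)) :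
    min 1 K⁻¹ * ((n + d : ℕ) : ℝ) ^ (1 - (2 + ε) / k) ≤ d := by
  have hexp : 1 - (2 + ε) / k = 1 - ε / k - 2 / k := by ring
  rw [hexp]
  have hδ : 0 ≤ ε / k := by positivity
  exact min_one_inv_mul_rpow_le_of_le_mul_rpow h.pos hδ (Nat.one_le_cast.mpr (by lia))
    (by positivity) (h.add_le_mul_rpow_of_isKFull hδ hk hn hd hnk hndk)

end ABCBound

theorem kfull_gap_of_abc_general {ε K : ℝ} {k : ℕ} (h : ABCBound (ε / k) K) (hε : 0 ≤ ε)
    (hk : k ≠ 0) {x : ℝ} (hx : 1 ≤ x) :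
    {n : ℕ | x < (n : ℝ) ∧ (n : ℝ) ≤ x + min 1 K⁻¹ * x ^ (1 - (2 + ε) / (k : ℝ)) ∧
      0 < n ∧ IsKFull k n}.Subsingleton := by
  have hK := h.pos
  refine Set.not_nontrivial_iff.mp fun hnontrivial ↦ ?_
  obtain ⟨n, ⟨hxn, -, hn, hnk⟩, m, ⟨-, hmx, -, hmk⟩, hnm⟩ := hnontrivial.exists_lt
  obtain ⟨d, rfl⟩ := Nat.exists_eq_add_of_le hnm.le
  have hd : 0 < d := by lia
  have hgap := h.min_one_inv_mul_rpow_le_of_isKFull hε hk hn.ne' hd.ne' hnk hmk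
  have hd_lt : (d : ℝ) < min 1 K⁻¹ * x ^ (1 - (2 + ε) / (k : ℝ)) := by
    push_cast at hmx
    linarith
  refine hd_lt.not_ge ?_
  rcases le_total (1 - (2 + ε) / (k : ℝ)) 0 with hθ | hθ
  · calc
      min 1 K⁻¹ * x ^ (1 - (2 + ε) / (k : ℝ)) ≤ 1 * 1 := by
        gcongr
        · exact min_le_left _ _
        · exact Real.rpow_le_one_of_one_le_of_nonpos hx hθ
      _ ≤ d := by simpa only [one_mul] using Nat.one_le_cast.mpr hd
  · refine le_trans ?_ hgap
    gcongr
    push_cast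
    linarith

/-- Assuming the abc-conjecture, for every integer `k ≥ 3` and `ε > 0` there exist
constants `cε > 0` and `C > 0` such that for all real `x ≥ C`, the interval
`(x, x + cε · x^(1 - (2+ε)/k)]` contains at most one `k`-full integer. -/
theorem kfull_gap_of_abc (habc : ABCConjecture) (k : ℕ) (hk : 3 ≤ k)
    (ε : ℝ) (hε : 0 < ε) :
    ∃ cε C : ℝ, 0 < cε ∧ 0 < C ∧ ∀ x : ℝ, C ≤ x →
      ({n : ℕ | x < (n : ℝ) ∧ (n : ℝ) ≤ x + cε * x ^ (1 - (2 + ε) / (k : ℝ)) ∧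
        0 < n ∧ IsKFull k n}.ncard ≤ 1) := by
  obtain ⟨K, hK⟩ := habc.exists_abcBound (δ := ε / k) (by positivity)
  refine ⟨min 1 K⁻¹, 1, lt_min one_pos (inv_pos.mpr hK.pos), one_pos, fun x hx ↦ ?_⟩
  have hsub := kfull_gap_of_abc_general hK hε.le (by lia) hx
  exact (Set.ncard_le_one hsub.finite).mpr fun n hn m hm ↦ hsub hn hm
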